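/- arXiv:2008.05593 — 6 statements merged into one kernel-verified Lean document; each statement's English description precedes it below -/
import Mathlib

section
/- Let N : ℕ, let α : Fin (N+1) → ℝ and β : Fin (N+1) → ℝ (with β 0 unused), and let T be the associated complex Jacobi matrix. Let ω : ℂ and define the continued-fraction values g : Fin (N+1) → ℂ by downward recursion: g N = (ω − α N)⁻¹ and g k = (ω − α k − (β (k+1))² · g (k+1))⁻¹ for k < N. Assume every denominator is nonzero, i.e. ω − α N ≠ 0 and ω − α k − (β (k+1))² · g (k+1) ≠ 0 for all k < N. Then the matrix ω • 1 − T is invertible and its inverse has (0,0)-entry equal to g 0; that is, ((ω • 1 − T)⁻¹) 0 0 = g 0. -/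
/-!
Write `M = ω • 1 - T`. Everything follows from solving `M v = c e₀` by eliminating the first
coordinate. Deleting row and column `0` leaves the resolvent matrix `M'` of the shifted
coefficients, and the remaining rows say `M' v' = (β₁ v₀) e₀` for the tail `v'` of `v`.
By induction `v₁ = g₁ β₁ v₀`, so row `0` reads `(ω - α₀ - β₁² g₁) v₀ = c`, that is `v₀ = g₀ c`;
and if `c = 0` then `v₀ = 0`, hence `v' = 0` by induction again (`jacobi_solve`).
The case `c = 0` is injectivity of `M`, and the case `c = 1`, applied to the first column of
`M⁻¹`, is the formula for the `(0,0)` entry.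
-/

/-- The complex symmetric tridiagonal (Jacobi) matrix with real diagonal
coefficients `α` and off-diagonal coefficients `β`. -/
def jacobiMatrix (N : ℕ) (α β : Fin (N + 1) → ℝ) :
    Matrix (Fin (N + 1)) (Fin (N + 1)) ℂ :=
  Matrix.of fun i j =>
    if i = j then (α i : ℂ)
    else if |((i : ℕ) : ℤ) - ((j : ℕ) : ℤ)| = 1 then (β (max i j) : ℂ)
    else 0

/-- Row `0` of `(ω • 1 - T) v`: only the first two coordinates contribute. -/
lemma jacobi_row_zero (n : ℕ) (α β : Fin (n + 1 + 1) → ℝ) (ω : ℂ) (v : Fin (n + 1 + 1) → ℂ) :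
    ((ω • (1 : Matrix (Fin (n + 1 + 1)) (Fin (n + 1 + 1)) ℂ) - jacobiMatrix (n + 1) α β).mulVec v) 0
      = (ω - α 0) * v 0 - β 1 * v 1 := by
  have h0 : ∀ j : Fin n,
      (ω • (1 : Matrix (Fin (n + 1 + 1)) (Fin (n + 1 + 1)) ℂ) - jacobiMatrix (n + 1) α β)
        0 j.succ.succ = 0 := by
    intro j
    have hne : (0 : Fin (n + 1 + 1)) ≠ j.succ.succ := (Fin.succ_ne_zero _).symm
    have habs : ¬ |((0 : ℕ) : ℤ) - (((j : ℕ) + 1 + 1 : ℕ) : ℤ)| = 1 := by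
      grind
    simpa [jacobiMatrix, hne] using fun h => absurd h (by simpa using habs)
  rw [Matrix.mulVec, dotProduct, Fin.sum_univ_succ, Fin.sum_univ_succ]
  simp only [h0]
  simp [jacobiMatrix]
  ring

/-- The rows below the first: the shifted resolvent matrix acts on the tail of `v`, and `v 0`
enters only in row `1`. -/
lemma jacobi_row_succ (n : ℕ) (α β : Fin (n + 1 + 1) → ℝ) (ω : ℂ) (v : Fin (n + 1 + 1) → ℂ)
    (i : Fin (n + 1)) :
    ((ω • (1 : Matrix (Fin (n + 1 + 1)) (Fin (n + 1 + 1)) ℂ) - jacobiMatrix (n + 1) α β).mulVec v)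
        i.succ
      = ((ω • (1 : Matrix (Fin (n + 1)) (Fin (n + 1)) ℂ)
            - jacobiMatrix n (fun k => α k.succ) (fun k => β k.succ)).mulVec (fun k => v k.succ)) i
          - (Pi.single 0 (β 1 * v 0) : Fin (n + 1) → ℂ) i := by
  have hs : ∀ j : Fin (n + 1),
      (ω • (1 : Matrix (Fin (n + 1 + 1)) (Fin (n + 1 + 1)) ℂ) - jacobiMatrix (n + 1) α β)
        i.succ j.succ
      = (ω • (1 : Matrix (Fin (n + 1)) (Fin (n + 1)) ℂ)
            - jacobiMatrix n (fun k => α k.succ) (fun k => β k.succ)) i j := by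
    intro j
    have hmax : max i.succ j.succ = (max i j).succ :=
      ((Fin.strictMono_succ (n := n + 1)).monotone.map_max).symm
    simp [jacobiMatrix, Matrix.one_apply, hmax]
  rw [Matrix.mulVec, dotProduct, Fin.sum_univ_succ]
  simp only [hs]
  rw [Matrix.mulVec, dotProduct]
  refine Fin.cases ?_ (fun k => ?_) i
  · simp [jacobiMatrix]
    ring
  · have habs : ¬ |(((k : ℕ) + 1 + 1 : ℕ) : ℤ) - ((0 : ℕ) : ℤ)| = 1 := by
      grind
    have h0 : (ω • (1 : Matrix (Fin (n + 1 + 1)) (Fin (n + 1 + 1)) ℂ) - jacobiMatrix (n + 1) α β)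
        k.succ.succ 0 = 0 := by
      simpa [jacobiMatrix, Fin.succ_ne_zero] using fun h => absurd h (by simpa using habs)
    rw [h0]
    simp

/-- A solution of `(ω • 1 - T) v = c e₀` has `v 0 = g 0 * c`, and vanishes if `c = 0`. Keeping `c`
arbitrary is what lets the induction pass to the tail of `v`, where it becomes `β 1 * v 0`. -/
lemma jacobi_solve (N : ℕ) : ∀ (α β : Fin (N + 1) → ℝ) (ω : ℂ) (g : Fin (N + 1) → ℂ)
    (_ : g (Fin.last N) = (ω - (α (Fin.last N) : ℂ))⁻¹)
    (_ : ∀ k : Fin N,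
      g k.castSucc = (ω - (α k.castSucc : ℂ) - (β k.succ : ℂ) ^ 2 * g k.succ)⁻¹)
    (_ : ω - (α (Fin.last N) : ℂ) ≠ 0)
    (_ : ∀ k : Fin N, ω - (α k.castSucc : ℂ) - (β k.succ : ℂ) ^ 2 * g k.succ ≠ 0)
    (c : ℂ) (v : Fin (N + 1) → ℂ)
    (_ : (ω • (1 : Matrix (Fin (N + 1)) (Fin (N + 1)) ℂ) - jacobiMatrix N α β).mulVec v
      = Pi.single 0 c),
    v 0 = g 0 * c ∧ (c = 0 → v = 0) := by
  induction N with
  | zero =>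
    intro α β ω g hgN _ hdN _ c v hv
    have h := congrFun hv 0
    simp [Matrix.mulVec, dotProduct, jacobiMatrix] at h hgN hdN
    have h1 : v 0 = g 0 * c := by
      rw [hgN, ← h, inv_mul_cancel_left₀ hdN]
    refine ⟨h1, fun hc => ?_⟩
    ext i
    obtain rfl : i = 0 := by omega
    simpa [hc] using h1
  | succ n ih =>
    intro α β ω g hgN hg hdN hd c v hv
    have htail := ih (fun k => α k.succ) (fun k => β k.succ) ω (fun k => g k.succ)
      (by simpa using hgN) (fun k => by simpa using hg k.succ) (by simpa using hdN)
      (fun k => by simpa using hd k.succ) (β 1 * v 0) (fun k => v k.succ) (by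
        ext i
        have h := congrFun hv i.succ
        rw [jacobi_row_succ] at h
        simpa [sub_eq_zero, Fin.succ_ne_zero] using h)
    have h0 := congrFun hv 0
    rw [jacobi_row_zero] at h0
    have hg0 := hg 0
    have hd0 := hd 0
    simp only [Fin.castSucc_zero, Fin.succ_zero_eq_one, Pi.single_eq_same] at hg0 hd0 h0 htail
    have h1 : v 0 = g 0 * c := by
      rw [hg0, eq_inv_mul_iff_mul_eq₀ hd0, ← h0, htail.1]
      ring
    refine ⟨h1, fun hc => ?_⟩
    have hv0 : v 0 = 0 := by rw [h1, hc, mul_zero]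
    have ht := htail.2 (by rw [hv0, mul_zero])
    ext i
    refine Fin.cases hv0 (fun k => congrFun ht k) i

/-- Continued-fraction representation of the (0,0) resolvent entry of a Jacobi matrix. -/
theorem jacobi_resolvent_continued_fraction
    (N : ℕ) (α β : Fin (N + 1) → ℝ) (ω : ℂ) (g : Fin (N + 1) → ℂ)
    (hgN : g (Fin.last N) = (ω - (α (Fin.last N) : ℂ))⁻¹)
    (hg : ∀ k : Fin N,
      g k.castSucc = (ω - (α k.castSucc : ℂ) - (β k.succ : ℂ) ^ 2 * g k.succ)⁻¹)
    (hdN : ω - (α (Fin.last N) : ℂ) ≠ 0)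
    (hd : ∀ k : Fin N, ω - (α k.castSucc : ℂ) - (β k.succ : ℂ) ^ 2 * g k.succ ≠ 0) :
    IsUnit (ω • (1 : Matrix (Fin (N + 1)) (Fin (N + 1)) ℂ) - jacobiMatrix N α β) ∧
      (ω • (1 : Matrix (Fin (N + 1)) (Fin (N + 1)) ℂ) - jacobiMatrix N α β)⁻¹ 0 0 = g 0 := by
  have key := jacobi_solve N α β ω g hgN hg hdN hd
  generalize ω • (1 : Matrix (Fin (N + 1)) (Fin (N + 1)) ℂ) - jacobiMatrix N α β = M at key ⊢
  have hM : IsUnit M := by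
    rw [← Matrix.mulVec_injective_iff_isUnit]
    intro x y hxy
    rw [← sub_eq_zero]
    exact (key 0 (x - y) (by simp [Matrix.mulVec_sub, hxy])).2 rfl
  refine ⟨hM, ?_⟩
  have h := (key 1 (M⁻¹.mulVec (Pi.single 0 1)) (by
    rw [Matrix.mulVec_mulVec, Matrix.mul_nonsing_inv _ ((Matrix.isUnit_iff_isUnit_det M).1 hM),
      Matrix.one_mulVec])).1
  simpa using h
end

section
/- Let E be a finite-dimensional complex inner product space, H : E →ₗ[ℂ] E self-adjoint, and Φ : E with Φ ≠ 0. Suppose ψ : Fin (N+1) → E is an orthonormal basis of E with ψ 0 = ‖Φ‖⁻¹ • Φ, in which H is tridiagonal: there are α : Fin (N+1) → ℝ and β : Fin (N+1) → ℝ such that ⟪ψ i, H (ψ i)⟫ = (α i : ℂ) for all i, ⟪ψ (i+1), H (ψ i)⟫ = (β (i+1) : ℂ) for all i < N, and ⟪ψ i, H (ψ j)⟫ = 0 whenever |(i:ℤ) − (j:ℤ)| > 1. Let ω : ℂ and define g : Fin (N+1) → ℂ by g N = (ω − α N)⁻¹ and g k = (ω − α k − (β (k+1))² · g (k+1))⁻¹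 for k < N, and assume all these denominators are nonzero. Then ω • id − H is invertible and ⟪Φ, (ω • id − H)⁻¹ Φ⟫ = ‖Φ‖² · g 0. -/
/-!
In the basis `ψ`, the equation `(ω - H) x = y` with `y` proportional to `ψ 0` is a tridiagonal
linear system whose right-hand side vanishes in every row but the first. Eliminating the unknowns
from the last row upwards (`backward_elimination`) gives `x (k + 1) = g (k + 1) β (k + 1) x k` and
finally `x 0 = g 0 y 0`: the pivots are exactly the denominators of the continued fraction.
For `y = 0` this forces `x = 0`, so `ω - H` is injective, hence invertible in finite dimension;
for `y = Φ` it evaluates the Green's function.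
-/

open scoped ComplexInnerProductSpace

/-- Gaussian elimination from the last row upwards for a tridiagonal system `(ω - M) x = y` whose
right-hand side is supported in row `0`; each `g i` is the inverse of the pivot of row `i`. -/
lemma backward_elimination (N : ℕ) (M : Fin (N + 1) → Fin (N + 1) → ℂ)
    (a b g x y : Fin (N + 1) → ℂ) (ω : ℂ)
    (hdiag : ∀ i, M i i = a i)
    (hlow : ∀ i : Fin N, M i.succ i.castSucc = b i.succ)
    (hup : ∀ i : Fin N, M i.castSucc i.succ = b i.succ)
    (htri : ∀ i j : Fin (N + 1), 1 < |((i : ℕ) : ℤ) - ((j : ℕ) : ℤ)| → M i j = 0)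
    (hgN : g (Fin.last N) = (ω - a (Fin.last N))⁻¹)
    (hg : ∀ k : Fin N, g k.castSucc = (ω - a k.castSucc - b k.succ ^ 2 * g k.succ)⁻¹)
    (hdN : ω - a (Fin.last N) ≠ 0)
    (hd : ∀ k : Fin N, ω - a k.castSucc - b k.succ ^ 2 * g k.succ ≠ 0)
    (hrow : ∀ i, ω * x i - ∑ j, M i j * x j = y i)
    (hy : ∀ i : Fin N, y i.succ = 0) :
    x 0 = g 0 * y 0 ∧ ∀ k : Fin N, x k.succ = g k.succ * (b k.succ * x k.castSucc) := by
  have hsplit : ∀ i, ∑ j, M i j * x j =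
      ∑ j ∈ Finset.Iio i, M i j * x j + a i * x i + ∑ j ∈ Finset.Ioi i, M i j * x j := by
    intro i
    have h1 : (Finset.univ : Finset (Fin (N + 1))) = Finset.Iic i ∪ Finset.Ioi i := by
      ext j; simp [le_or_gt]
    have h2 : Disjoint (Finset.Iic i) (Finset.Ioi i) := by
      rw [Finset.disjoint_left]; intro j; simp
    rw [h1, Finset.sum_union h2, ← Finset.Iio_insert, Finset.sum_insert (by simp), hdiag]
    ring
  have hIio : ∀ k : Fin N, ∑ j ∈ Finset.Iio k.succ, M k.succ j * x j
      = b k.succ * x k.castSucc := by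
    intro k
    rw [Finset.sum_eq_single k.castSucc, hlow]
    · intro j hj hne
      rw [htri, zero_mul]
      rw [Finset.mem_Iio, Fin.lt_def] at hj
      rw [ne_eq, Fin.ext_iff] at hne
      simp only [Fin.val_succ, Fin.val_castSucc] at hj hne ⊢
      rw [lt_abs]; omega
    · intro h; simp at h
  have hIoi : ∀ k : Fin N, ∑ j ∈ Finset.Ioi k.castSucc, M k.castSucc j * x j
      = b k.succ * x k.succ := by
    intro k
    rw [Finset.sum_eq_single k.succ, hup]
    · intro j hj hne
      rw [htri, zero_mul]
      rw [Finset.mem_Ioi, Fin.lt_def] at hj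
      rw [ne_eq, Fin.ext_iff] at hne
      simp only [Fin.val_succ, Fin.val_castSucc] at hj hne ⊢
      rw [lt_abs]; omega
    · intro h; simp at h
  -- The sum over `j < i` is empty for `i = 0` and reduces to the term `j = i - 1` otherwise,
  -- so the first row and the others share one formula.
  have key : ∀ i, x i = g i * (y i + ∑ j ∈ Finset.Iio i, M i j * x j) := by
    intro i
    induction i using Fin.reverseInduction with
    | last =>
      have h := hrow (Fin.last N)
      have he : Finset.Ioi (Fin.last N) = ∅ := by
        ext j; simp [Fin.le_last]
      rw [hsplit, he, Finset.sum_empty] at h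
      rw [hgN, eq_inv_mul_iff_mul_eq₀ hdN]
      linear_combination h
    | cast k ih =>
      have h := hrow k.castSucc
      rw [hsplit, hIoi] at h
      rw [hIio, hy, zero_add] at ih
      rw [hg, eq_inv_mul_iff_mul_eq₀ (hd k)]
      linear_combination h + b k.succ * ih
  refine ⟨?_, fun k => ?_⟩
  · have h := key 0
    have he : Finset.Iio (0 : Fin (N + 1)) = ∅ := by
      ext j; simp
    rwa [he, Finset.sum_empty, add_zero] at h
  · have h := key k.succ
    rwa [hIio, hy, zero_add] at h

/-- Continued-fraction representation of the Green's function
`G(ω) = ⟪Φ, (ω - H)⁻¹ Φ⟫` of a self-adjoint operator `H` that is tridiagonal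
in an orthonormal basis whose first vector is the normalization of `Φ`. -/
theorem greens_function_continued_fraction
    {E : Type*} [NormedAddCommGroup E] [InnerProductSpace ℂ E] [FiniteDimensional ℂ E]
    (N : ℕ) (H : E →ₗ[ℂ] E)
    (hH : ∀ x y : E, ⟪H x, y⟫ = ⟪x, H y⟫)
    (Φ : E) (hΦ : Φ ≠ 0)
    (ψ : Fin (N + 1) → E)
    (hortho : Orthonormal ℂ ψ)
    (hspan : Submodule.span ℂ (Set.range ψ) = ⊤)
    (hψ0 : ψ 0 = ((‖Φ‖ : ℂ))⁻¹ • Φ)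
    (α β : Fin (N + 1) → ℝ)
    (hdiag : ∀ i : Fin (N + 1), ⟪ψ i, H (ψ i)⟫ = (α i : ℂ))
    (hoff : ∀ i : Fin N, ⟪ψ i.succ, H (ψ i.castSucc)⟫ = (β i.succ : ℂ))
    (htri : ∀ i j : Fin (N + 1), 1 < |((i : ℕ) : ℤ) - ((j : ℕ) : ℤ)| → ⟪ψ i, H (ψ j)⟫ = 0)
    (ω : ℂ) (g : Fin (N + 1) → ℂ)
    (hgN : g (Fin.last N) = (ω - (α (Fin.last N) : ℂ))⁻¹)
    (hg : ∀ k : Fin N,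
      g k.castSucc = (ω - (α k.castSucc : ℂ) - (β k.succ : ℂ) ^ 2 * g k.succ)⁻¹)
    (hdN : ω - (α (Fin.last N) : ℂ) ≠ 0)
    (hd : ∀ k : Fin N, ω - (α k.castSucc : ℂ) - (β k.succ : ℂ) ^ 2 * g k.succ ≠ 0) :
    IsUnit (ω • (LinearMap.id : E →ₗ[ℂ] E) - H : Module.End ℂ E) ∧
      ⟪Φ, Ring.inverse (ω • (LinearMap.id : E →ₗ[ℂ] E) - H : Module.End ℂ E) Φ⟫ =
        (‖Φ‖ : ℂ) ^ 2 * g 0 := by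
  have hΦn : (‖Φ‖ : ℂ) ≠ 0 := by simpa using hΦ
  have hΦψ : Φ = (‖Φ‖ : ℂ) • ψ 0 := by rw [hψ0, smul_inv_smul₀ hΦn]
  let B : OrthonormalBasis (Fin (N + 1)) ℂ E := OrthonormalBasis.mk hortho hspan.ge
  have hB : ∀ i, B i = ψ i := fun i => by simp [B]
  have hexp : ∀ x : E, ∑ j, ⟪ψ j, x⟫ • ψ j = x := fun x => by
    simpa only [hB] using B.sum_repr' x
  set A : Module.End ℂ E := ω • (LinearMap.id : E →ₗ[ℂ] E) - H with hA
  have solve : ∀ x : E, (∀ i : Fin N, ⟪ψ i.succ, A x⟫ = 0) →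
      ⟪ψ 0, x⟫ = g 0 * ⟪ψ 0, A x⟫ ∧
        ∀ k : Fin N, ⟪ψ k.succ, x⟫ = g k.succ * ((β k.succ : ℂ) * ⟪ψ k.castSucc, x⟫) := by
    intro x hx
    refine backward_elimination N (fun i j => ⟪ψ i, H (ψ j)⟫) (fun i => (α i : ℂ))
      (fun i => (β i : ℂ)) g (fun i => ⟪ψ i, x⟫) (fun i => ⟪ψ i, A x⟫) ω hdiag hoff ?_ htri
      hgN hg hdN hd ?_ hx
    · intro i
      rw [← hH, ← inner_conj_symm, hoff, Complex.conj_ofReal]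
    · intro i
      have h : ⟪ψ i, H x⟫ = ∑ j, ⟪ψ i, H (ψ j)⟫ * ⟪ψ j, x⟫ := by
        conv_lhs => rw [← hexp x]
        simp only [map_sum, map_smul, inner_sum, inner_smul_right, mul_comm]
      simp only [hA, LinearMap.sub_apply, LinearMap.smul_apply, LinearMap.id_apply,
        inner_sub_right, inner_smul_right, h]
  have hinj : LinearMap.ker A = ⊥ := by
    rw [LinearMap.ker_eq_bot']
    intro x hx
    obtain ⟨h0, hs⟩ := solve x (fun i => by rw [hx, inner_zero_right])
    have hz : ∀ i, ⟪ψ i, x⟫ = 0 := by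
      intro i
      induction i using Fin.induction with
      | zero => rw [h0, hx, inner_zero_right, mul_zero]
      | succ k ih => rw [hs, ih, mul_zero, mul_zero]
    rw [← hexp x]
    simp [hz]
  have hunit : IsUnit A := (LinearMap.isUnit_iff_ker_eq_bot A).2 hinj
  refine ⟨hunit, ?_⟩
  have hAx : A (Ring.inverse A Φ) = Φ := by
    rw [← Module.End.mul_apply, Ring.mul_inverse_cancel A hunit, Module.End.one_apply]
  have hcoord : ∀ i, ⟪ψ i, Φ⟫ = if i = 0 then (‖Φ‖ : ℂ) else 0 := by
    intro i
    conv_lhs => rw [hΦψ]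
    rw [inner_smul_right, orthonormal_iff_ite.1 hortho]
    simp
  obtain ⟨h0, -⟩ := solve (Ring.inverse A Φ) (fun i => by
    rw [hAx, hcoord, if_neg (Fin.succ_ne_zero i)])
  rw [hAx, hcoord, if_pos rfl] at h0
  have hl : ⟪Φ, Ring.inverse A Φ⟫ = (‖Φ‖ : ℂ) * ⟪ψ 0, Ring.inverse A Φ⟫ := by
    rw [hψ0, inner_smul_left, map_inv₀, Complex.conj_ofReal, mul_inv_cancel_left₀ hΦn]
  rw [hl, h0]
  ring
end

section
/- Let N ≥ 1, let α : Fin (N+1) → ℝ, β : Fin (N+1) → ℝ, and let T be the associated complex Jacobi matrix on Fin (N+1). Let T₁ be the trailing principal submatrix of T on the index set {1,…,N} (a Jacobi matrix with coefficients α, β shifted by one). Let ω : ℂ. If ω • 1 − T₁ is invertible and ω − α 0 − (β 1)² · (((ω • 1 − T₁)⁻¹) 0 0) ≠ 0, then ω • 1 − T is invertible and ((ω • 1 − T)⁻¹) 0 0 = (ω − α 0 − (β 1)² · (((ω • 1 − T₁)⁻¹) 0 0))⁻¹. -/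
section Peel

variable {K : Type*} [Field K] {n : ℕ} {M : Matrix (Fin (n + 2)) (Fin (n + 2)) K} {b y : K}
  {v : Fin (n + 2) → K}

/-- If `M v` is supported at `0`, the rows of `M v` below the first determine the tail of `v`
from `v 0`. -/
theorem tail_eq_of_mulVec_eq_single (hS : IsUnit (M.submatrix Fin.succ Fin.succ))
    (hc : ∀ i : Fin (n + 1), M i.succ 0 = Pi.single (M := fun _ => K) 0 b i)
    (hv : M.mulVec v = Pi.single 0 y) (j : Fin (n + 1)) :
    v j.succ = -(v 0 * b) * (M.submatrix Fin.succ Fin.succ)⁻¹ j 0 := by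
  have hrow : (M.submatrix Fin.succ Fin.succ).mulVec (fun j => v j.succ) =
      Pi.single 0 (-(v 0 * b)) := by
    ext i
    have h := congrFun hv i.succ
    simp only [Matrix.mulVec, dotProduct, Fin.sum_univ_succ (n := n + 1), hc,
      Pi.single_eq_of_ne (Fin.succ_ne_zero i)] at h
    simp only [Matrix.mulVec, dotProduct, Matrix.submatrix_apply]
    rw [eq_neg_of_add_eq_zero_right h]
    by_cases hi : i = 0
    · subst hi
      simp [mul_comm]
    · simp [hi]
  have h := congrArg ((M.submatrix Fin.succ Fin.succ)⁻¹).mulVec hrow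
  rw [Matrix.mulVec_mulVec, Matrix.nonsing_inv_mul _ ((Matrix.isUnit_iff_isUnit_det _).1 hS),
    Matrix.one_mulVec, Matrix.mulVec_single] at h
  simpa [mul_comm] using congrFun h j

/-- Substituting the tail into the first row leaves a scalar equation for `v 0`, whose coefficient
is the Schur complement of the trailing block. -/
theorem head_mul_schur_of_mulVec_eq_single (hS : IsUnit (M.submatrix Fin.succ Fin.succ))
    (hc : ∀ i : Fin (n + 1), M i.succ 0 = Pi.single (M := fun _ => K) 0 b i)
    (hr : ∀ j : Fin (n + 1), M 0 j.succ = Pi.single (M := fun _ => K) 0 b j)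
    (hv : M.mulVec v = Pi.single 0 y) :
    v 0 * (M 0 0 - b ^ 2 * (M.submatrix Fin.succ Fin.succ)⁻¹ 0 0) = y := by
  have h := congrFun hv 0
  have hsum : ∑ j : Fin (n + 1), Pi.single (M := fun _ => K) 0 b j * v j.succ =
      b * v (Fin.succ 0) := by
    rw [Finset.sum_eq_single 0 (fun j _ hj => by simp [hj]) (by simp), Pi.single_eq_same]
  simp only [Matrix.mulVec, dotProduct, Fin.sum_univ_succ (n := n + 1), hr,
    Pi.single_eq_same] at h
  rw [hsum, tail_eq_of_mulVec_eq_single hS hc hv 0] at h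
  linear_combination h

/-- The peeling step for any matrix whose first row and first column agree off the diagonal and
have at most one nonzero entry `b` there, in position `1`. -/
theorem isUnit_and_inv_zero_zero_of_peel (hS : IsUnit (M.submatrix Fin.succ Fin.succ))
    (hc : ∀ i : Fin (n + 1), M i.succ 0 = Pi.single (M := fun _ => K) 0 b i)
    (hr : ∀ j : Fin (n + 1), M 0 j.succ = Pi.single (M := fun _ => K) 0 b j)
    (hs : M 0 0 - b ^ 2 * (M.submatrix Fin.succ Fin.succ)⁻¹ 0 0 ≠ 0) :
    IsUnit M ∧ M⁻¹ 0 0 = (M 0 0 - b ^ 2 * (M.submatrix Fin.succ Fin.succ)⁻¹ 0 0)⁻¹ := by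
  have hM : IsUnit M := by
    rw [← Matrix.mulVec_injective_iff_isUnit]
    refine (injective_iff_map_eq_zero M.mulVecLin).2 fun v hv => ?_
    have hv' : M.mulVec v = Pi.single 0 0 := by simpa using hv
    have h0 : v 0 = 0 :=
      (mul_eq_zero.1 (head_mul_schur_of_mulVec_eq_single hS hc hr hv')).resolve_right hs
    ext i
    refine Fin.cases h0 (fun j => ?_) i
    simp [tail_eq_of_mulVec_eq_single hS hc hv' j, h0]
  refine ⟨hM, eq_inv_of_mul_eq_one_left ?_⟩
  have hcol : M.mulVec (fun i => M⁻¹ i 0) = Pi.single 0 1 := by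
    have h : M.mulVec (M⁻¹.mulVec (Pi.single 0 1)) = Pi.single 0 1 := by
      rw [Matrix.mulVec_mulVec, Matrix.mul_nonsing_inv _ ((Matrix.isUnit_iff_isUnit_det _).1 hM),
        Matrix.one_mulVec]
    rw [Matrix.mulVec_single_one] at h
    exact h
  exact head_mul_schur_of_mulVec_eq_single (v := fun i => M⁻¹ i 0) hS hc hr hcol

end Peel

/-- The off-diagonal part of the first row of a Jacobi matrix: the only nonzero coefficient is
`β 1`. -/
theorem jacobiMatrix_zero_succ (N : ℕ) (α β : Fin (N + 2) → ℝ) (j : Fin (N + 1)) :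
    jacobiMatrix (N + 1) α β 0 j.succ = Pi.single (M := fun _ => ℂ) 0 (β 1 : ℂ) j := by
  by_cases hj : j = 0
  · subst hj
    simp [jacobiMatrix]
  · have hj' : (j : ℕ) ≠ 0 := fun h => hj (Fin.ext h)
    have h : ¬ |((0 : ℕ) : ℤ) - ((j : ℕ) + 1 : ℕ)| = 1 := by
      rw [abs_eq (by norm_num)]
      omega
    rw [Pi.single_eq_of_ne hj, jacobiMatrix, Matrix.of_apply, if_neg (Fin.succ_ne_zero j).symm]
    exact if_neg h

theorem jacobiMatrix_symm (N : ℕ) (α β : Fin (N + 1) → ℝ) (i j : Fin (N + 1)) :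
    jacobiMatrix N α β i j = jacobiMatrix N α β j i := by
  by_cases h : i = j
  · rw [h]
  · simp only [jacobiMatrix, Matrix.of_apply, if_neg h, if_neg (Ne.symm h), max_comm i j,
      abs_sub_comm ((i : ℕ) : ℤ)]

/-- One-step peeling of the continued fraction: the (0,0) resolvent entry of a
Jacobi matrix `T` of size `N + 2` in terms of the (0,0) resolvent entry of its
trailing principal submatrix `T₁` on indices `{1, …, N + 1}`. -/
theorem jacobi_resolvent_peel
    (N : ℕ) (α β : Fin (N + 2) → ℝ) (ω : ℂ)
    (h1 : IsUnit (ω • (1 : Matrix (Fin (N + 1)) (Fin (N + 1)) ℂ) -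
      (jacobiMatrix (N + 1) α β).submatrix Fin.succ Fin.succ))
    (h2 : ω - (α 0 : ℂ) - (β 1 : ℂ) ^ 2 *
      ((ω • (1 : Matrix (Fin (N + 1)) (Fin (N + 1)) ℂ) -
        (jacobiMatrix (N + 1) α β).submatrix Fin.succ Fin.succ)⁻¹ 0 0) ≠ 0) :
    IsUnit (ω • (1 : Matrix (Fin (N + 2)) (Fin (N + 2)) ℂ) - jacobiMatrix (N + 1) α β) ∧
      (ω • (1 : Matrix (Fin (N + 2)) (Fin (N + 2)) ℂ) - jacobiMatrix (N + 1) α β)⁻¹ 0 0 =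
        (ω - (α 0 : ℂ) - (β 1 : ℂ) ^ 2 *
          ((ω • (1 : Matrix (Fin (N + 1)) (Fin (N + 1)) ℂ) -
            (jacobiMatrix (N + 1) α β).submatrix Fin.succ Fin.succ)⁻¹ 0 0))⁻¹ := by
  have hsub : (ω • (1 : Matrix (Fin (N + 2)) (Fin (N + 2)) ℂ) -
      jacobiMatrix (N + 1) α β).submatrix Fin.succ Fin.succ =
      ω • (1 : Matrix (Fin (N + 1)) (Fin (N + 1)) ℂ) -
        (jacobiMatrix (N + 1) α β).submatrix Fin.succ Fin.succ := by
    ext i j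
    simp [Matrix.one_apply]
  have hr : ∀ j : Fin (N + 1), (ω • (1 : Matrix (Fin (N + 2)) (Fin (N + 2)) ℂ) -
      jacobiMatrix (N + 1) α β) 0 j.succ = Pi.single (M := fun _ => ℂ) 0 (-(β 1 : ℂ)) j := by
    intro j
    simp [jacobiMatrix_zero_succ, Pi.single_neg, (Fin.succ_ne_zero j).symm]
  have hc : ∀ i : Fin (N + 1), (ω • (1 : Matrix (Fin (N + 2)) (Fin (N + 2)) ℂ) -
      jacobiMatrix (N + 1) α β) i.succ 0 = Pi.single (M := fun _ => ℂ) 0 (-(β 1 : ℂ)) i := by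
    intro i
    simp [jacobiMatrix_symm _ _ _ i.succ 0, jacobiMatrix_zero_succ,
      Pi.single_neg]
  have h00 : (ω • (1 : Matrix (Fin (N + 2)) (Fin (N + 2)) ℂ) -
      jacobiMatrix (N + 1) α β) 0 0 = ω - (α 0 : ℂ) := by
    simp [jacobiMatrix]
  have key := isUnit_and_inv_zero_zero_of_peel (hsub ▸ h1) hc hr
  rw [hsub, h00, neg_sq] at key
  exact key h2
end

section
/- Let E be a finite-dimensional complex inner product space, H : E →ₗ[ℂ] E self-adjoint, and ψ : Fin (N+1) → E an orthonormal family. Set Φ := ψ 0, and suppose that for every k ≤ N the span of {ψ 0, …, ψ k} equals the span of the Krylov vectors {Φ, H Φ, …, H^k Φ}. Then for all m, n ≤ N with |(m : ℤ) − (n : ℤ)| > 1 we have ⟪ψ m, H (ψ n)⟫ = 0; that is, H is tridiagonal in the basis ψ. -/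
/-!
`H` maps the Krylov subspace of order `k` into the one of order `k + 1`, so
`H (ψ n) ∈ span {ψ 0, …, ψ (n + 1)}`, which is orthogonal to `ψ m` as soon as `n + 1 < m`
(`inner_map_eq_zero_of_add_one_lt`). The matrix of `H` in the family `ψ` is therefore upper
Hessenberg; self-adjointness transfers the vanishing to the other side of the diagonal.
-/

open scoped ComplexInnerProductSpace

/-- The upper Hessenberg property, which needs no symmetry of `H`: an orthonormal family adapted
to the Krylov flag of `H` has vanishing matrix entries below the first subdiagonal. -/
theorem inner_map_eq_zero_of_add_one_lt
    {E : Type*} [NormedAddCommGroup E] [InnerProductSpace ℂ E]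
    {N : ℕ} (H : E →ₗ[ℂ] E) (ψ : Fin (N + 1) → E) (hortho : Orthonormal ℂ ψ)
    (hkrylov : ∀ k : Fin (N + 1),
      Submodule.span ℂ (ψ '' {i : Fin (N + 1) | i ≤ k}) =
        Submodule.span ℂ ((fun j : ℕ => ((H : Module.End ℂ E) ^ j) (ψ 0)) ''
          {j : ℕ | j ≤ (k : ℕ)}))
    (m n : Fin (N + 1)) (hmn : (n : ℕ) + 1 < m) : ⟪ψ m, H (ψ n)⟫ = 0 := by
  -- The index `n + 1` is in range because it lies below `m`.
  let k : Fin (N + 1) := ⟨n + 1, hmn.trans m.isLt⟩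
  have hn : ψ n ∈ Submodule.span ℂ (ψ '' {i : Fin (N + 1) | i ≤ n}) :=
    Submodule.subset_span ⟨n, le_refl n, rfl⟩
  have hHn : H (ψ n) ∈ Submodule.span ℂ (ψ '' {i : Fin (N + 1) | i ≤ k}) := by
    rw [hkrylov] at hn ⊢
    rw [← Submodule.mem_comap]
    refine Submodule.span_le.2 ?_ hn
    rintro _ ⟨j, hj, rfl⟩
    exact Submodule.subset_span
      ⟨j + 1, Nat.succ_le_succ hj, by simp [pow_succ', Module.End.mul_apply]⟩
  have hle : Submodule.span ℂ (ψ '' {i : Fin (N + 1) | i ≤ k}) ≤ (ℂ ∙ ψ m)ᗮ := by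
    rw [Submodule.span_le]
    rintro _ ⟨i, hi, rfl⟩
    have hne : m ≠ i := fun h => absurd (h ▸ hi : m ≤ k) (not_le.2 hmn)
    exact Submodule.mem_orthogonal_singleton_iff_inner_right.2 (hortho.2 hne)
  exact Submodule.mem_orthogonal_singleton_iff_inner_right.1 (hle hHn)

/-- If an orthonormal family `ψ` spans the same flags as the Krylov subspaces of a
self-adjoint operator `H` from the starting vector `Φ = ψ 0`, then `H` is
tridiagonal in the basis `ψ`. -/
theorem krylov_orthonormal_tridiagonal
    {E : Type*} [NormedAddCommGroup E] [InnerProductSpace ℂ E] [FiniteDimensional ℂ E]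
    (N : ℕ) (H : E →ₗ[ℂ] E)
    (hH : ∀ x y : E, ⟪H x, y⟫ = ⟪x, H y⟫)
    (ψ : Fin (N + 1) → E)
    (hortho : Orthonormal ℂ ψ)
    (hkrylov : ∀ k : Fin (N + 1),
      Submodule.span ℂ (ψ '' {i : Fin (N + 1) | i ≤ k}) =
        Submodule.span ℂ ((fun j : ℕ => ((H : Module.End ℂ E) ^ j) (ψ 0)) ''
          {j : ℕ | j ≤ (k : ℕ)})) :
    ∀ m n : Fin (N + 1), 1 < |((m : ℕ) : ℤ) - ((n : ℕ) : ℤ)| → ⟪ψ m, H (ψ n)⟫ = 0 := by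
  intro m n h
  rcases lt_abs.1 h with h | h
  · exact inner_map_eq_zero_of_add_one_lt H ψ hortho hkrylov m n (by omega)
  · rw [← hH, inner_eq_zero_symm]
    exact inner_map_eq_zero_of_add_one_lt H ψ hortho hkrylov n m (by omega)
end

section
/- Let E be a finite-dimensional complex inner product space, H : E →ₗ[ℂ] E self-adjoint, and Φ : E with Φ ≠ 0. Define the Lanczos vectors v : ℕ → E by v 0 = Φ, v 1 = H (v 0) − α 0 • v 0, and v (n+1) = H (v n) − α n • v n − β n • v (n−1) for n ≥ 1, where α n = ⟪v n, H (v n)⟫ / ‖v n‖² and β n = ‖v n‖² / ‖v (n−1)‖². Let N : ℕ and assume v j ≠ 0 for all j ≤ N. Then the vectors v 0, v 1, …, v (N+1) are pairwise orthogonal: ⟪v i, v j⟫ = 0 for all i ≠ j with i, j ≤ N+1. -/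
/-!
The vectors stay orthogonal because `H` is symmetric and acts on them as a tridiagonal operator:
`H (v i)` lies in the span of `v (i+1)`, `v i` and `v (i-1)`, with coefficient `1` on `v (i+1)`
(`lanczosVec_map`). Suppose `v 0, …, v (m+1)` are pairwise orthogonal and pair `v (m+2)` with `v i`,
moving `H` onto `v i`. For `i < m` every term vanishes, since `H (v i)` only involves vectors of
index at most `m`. For `i = m` the surviving term `⟪v (m+1), v (m+1)⟫` is cancelled by the choice
of `β`, and for `i = m + 1` the choice of `α` gives zero. The divisions by `‖v m‖²` and
`‖v (m+1)‖²` are where nonvanishing is needed.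
-/


open scoped ComplexInnerProductSpace

/-- The Lanczos vectors `v 0 = Φ`, `v 1 = H (v 0) - α 0 • v 0`, and
`v (n+1) = H (v n) - α n • v n - β n • v (n-1)` for `n ≥ 1`, where
`α n = ⟪v n, H (v n)⟫ / ‖v n‖²` and `β n = ‖v n‖² / ‖v (n-1)‖²`. -/
noncomputable def lanczosVec {E : Type*} [NormedAddCommGroup E] [InnerProductSpace ℂ E]
    (H : E →ₗ[ℂ] E) (Φ : E) : ℕ → E
  | 0 => Φ
  | 1 => H Φ - (⟪Φ, H Φ⟫ / (‖Φ‖ : ℂ) ^ 2) • Φ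
  | (n + 2) =>
      H (lanczosVec H Φ (n + 1))
        - (⟪lanczosVec H Φ (n + 1), H (lanczosVec H Φ (n + 1))⟫ /
            (‖lanczosVec H Φ (n + 1)‖ : ℂ) ^ 2) • lanczosVec H Φ (n + 1)
        - ((‖lanczosVec H Φ (n + 1)‖ : ℂ) ^ 2 / (‖lanczosVec H Φ n‖ : ℂ) ^ 2) •
            lanczosVec H Φ n

/-- `H` is tridiagonal along the Lanczos vectors. At `i = 0` the truncated index `i - 1` is harmless:
the coefficient `b` can be taken to be `0`. -/
theorem lanczosVec_map {E : Type*} [NormedAddCommGroup E] [InnerProductSpace ℂ E]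
    (H : E →ₗ[ℂ] E) (Φ : E) (i : ℕ) :
    ∃ a b : ℂ, H (lanczosVec H Φ i) =
      lanczosVec H Φ (i + 1) + a • lanczosVec H Φ i + b • lanczosVec H Φ (i - 1) := by
  rcases i with _ | i
  · refine ⟨⟪Φ, H Φ⟫ / (‖Φ‖ : ℂ) ^ 2, 0, ?_⟩
    simp [lanczosVec]
  · refine ⟨⟪lanczosVec H Φ (i + 1), H (lanczosVec H Φ (i + 1))⟫ /
      (‖lanczosVec H Φ (i + 1)‖ : ℂ) ^ 2,
      (‖lanczosVec H Φ (i + 1)‖ : ℂ) ^ 2 / (‖lanczosVec H Φ i‖ : ℂ) ^ 2, ?_⟩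
    rw [lanczosVec.eq_3 H Φ i, Nat.add_sub_cancel]
    abel

/-- The inductive step: `v n` is orthogonal to every earlier Lanczos vector. -/
theorem lanczosVec_inner_eq_zero_of_lt {E : Type*} [NormedAddCommGroup E] [InnerProductSpace ℂ E]
    (H : E →ₗ[ℂ] E) (hH : ∀ x y : E, ⟪H x, y⟫ = ⟪x, H y⟫) (Φ : E) (n : ℕ)
    (hnz : ∀ j < n, lanczosVec H Φ j ≠ 0)
    (ih : ∀ i j : ℕ, i < j → j < n → ⟪lanczosVec H Φ i, lanczosVec H Φ j⟫ = 0)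
    (i : ℕ) (hi : i < n) :
    ⟪lanczosVec H Φ i, lanczosVec H Φ n⟫ = 0 := by
  have hn : ∀ j < n, (‖lanczosVec H Φ j‖ : ℂ) ^ 2 ≠ 0 := fun j hj => by
    simpa using hnz j hj
  rcases n with _ | _ | m
  · omega
  · obtain rfl : i = 0 := by omega
    have h0 := hn 0 (by omega)
    simp only [lanczosVec] at h0 ⊢
    rw [inner_sub_right, inner_smul_right, inner_self_eq_norm_sq_to_K]
    exact sub_eq_zero.2 (div_mul_cancel₀ _ h0).symm
  · have h1 := hn (m + 1) (by omega)
    have h0 := hn m (by omega)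
    rw [lanczosVec.eq_3, inner_sub_right, inner_sub_right, inner_smul_right, inner_smul_right]
    obtain rfl | hi' : i = m + 1 ∨ i ≤ m := by omega
    · have hs := inner_eq_zero_symm.1 (ih m (m + 1) (by omega) (by omega))
      rw [hs, inner_self_eq_norm_sq_to_K, mul_zero, sub_zero]
      exact sub_eq_zero.2 (div_mul_cancel₀ _ h1).symm
    · obtain ⟨a, b, hab⟩ := lanczosVec_map H Φ i
      rw [← hH, hab, inner_add_left, inner_add_left, inner_smul_left, inner_smul_left,
        ih i (m + 1) (by omega) (by omega), ih (i - 1) (m + 1) (by omega) (by omega)]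
      simp only [mul_zero, add_zero, sub_zero]
      obtain rfl | hlt := hi'.eq_or_lt
      · rw [inner_self_eq_norm_sq_to_K, inner_self_eq_norm_sq_to_K]
        exact sub_eq_zero.2 (div_mul_cancel₀ _ h0).symm
      · rw [ih (i + 1) (m + 1) (by omega) (by omega), ih i m hlt (by omega), mul_zero, sub_zero]

/-- The three-term Lanczos recursion produces pairwise orthogonal vectors. -/
theorem lanczosVec_pairwise_orthogonal
    {E : Type*} [NormedAddCommGroup E] [InnerProductSpace ℂ E] [FiniteDimensional ℂ E]
    (H : E →ₗ[ℂ] E) (hH : ∀ x y : E, ⟪H x, y⟫ = ⟪x, H y⟫)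
    (Φ : E) (hΦ : Φ ≠ 0) (N : ℕ)
    (hnz : ∀ j ≤ N, lanczosVec H Φ j ≠ 0) :
    ∀ i j : ℕ, i ≤ N + 1 → j ≤ N + 1 → i ≠ j →
      ⟪lanczosVec H Φ i, lanczosVec H Φ j⟫ = 0 := by
  have key : ∀ n ≤ N + 1, ∀ i < n, ⟪lanczosVec H Φ i, lanczosVec H Φ n⟫ = 0 := by
    intro n
    induction n using Nat.strong_induction_on with
    | _ n ih =>
      intro hn
      exact lanczosVec_inner_eq_zero_of_lt H hH Φ n (fun j hj => hnz j (by omega))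
        (fun i j hij hj => ih j hj (by omega) i hij)
  intro i j hi hj hij
  rcases hij.lt_or_gt with h | h
  · exact key j hj i h
  · exact inner_eq_zero_symm.1 (key i hi j h)
end

section
/- Let E be a finite-dimensional complex inner product space, H : E →ₗ[ℂ] E self-adjoint, and Φ : E with Φ ≠ 0. Define the Lanczos vectors v : ℕ → E by v 0 = Φ, v 1 = H (v 0) − α 0 • v 0, and v (n+1) = H (v n) − α n • v n − β n • v (n−1) for n ≥ 1, where α n = ⟪v n, H (v n)⟫ / ‖v n‖² and β n = ‖v n‖² / ‖v (n−1)‖². Let N : ℕ and assume v j ≠ 0 for all j ≤ N. Then for every k ≤ N, the span of {v 0, …, v k} equals the span of the Krylov vectors {Φ, H Φ, …, H^k Φ}. -/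
/-!
Each step of the recursion changes `H (v n)` only by a combination of `v n` and `v (n - 1)`, so
`v (n + 1) - H (v n)` lies in the span of `v 0, …, v n`, whatever the scalar coefficients are
(`lanczosVec_succ_sub_mem`). Read in one direction, this puts `v n` in the `n`-th Krylov subspace,
since `H` maps the `n`-th Krylov subspace into the next one. Read in the other, it shows that `H`
maps the span of `v 0, …, v n` into that of `v 0, …, v (n + 1)`, so `H ^ n Φ` lies in the span of
`v 0, …, v n`.
-/

open scoped ComplexInnerProductSpace

theorem span_image_le_mono {E : Type*} [AddCommGroup E] [Module ℂ E] (f : ℕ → E) {m n : ℕ}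
    (h : m ≤ n) :
    Submodule.span ℂ (f '' {i : ℕ | i ≤ m}) ≤ Submodule.span ℂ (f '' {i : ℕ | i ≤ n}) :=
  Submodule.span_mono (Set.image_mono fun _ hi => le_trans hi h)

theorem mem_span_image_le {E : Type*} [AddCommGroup E] [Module ℂ E] (f : ℕ → E) {m n : ℕ}
    (h : m ≤ n) : f m ∈ Submodule.span ℂ (f '' {i : ℕ | i ≤ n}) :=
  Submodule.subset_span ⟨m, h, rfl⟩

/-- If `H (f i)` lies in the span of `f 0, …, f (i + 1)` for every `i`, then `H` maps the span of
`f 0, …, f n` into the span of `f 0, …, f (n + 1)`. -/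
theorem map_mem_span_image_succ {E : Type*} [AddCommGroup E] [Module ℂ E] (H : E →ₗ[ℂ] E)
    (f : ℕ → E) (hf : ∀ i, H (f i) ∈ Submodule.span ℂ (f '' {j : ℕ | j ≤ i + 1})) {n : ℕ} {x : E}
    (hx : x ∈ Submodule.span ℂ (f '' {i : ℕ | i ≤ n})) :
    H x ∈ Submodule.span ℂ (f '' {i : ℕ | i ≤ n + 1}) := by
  have hle : Submodule.span ℂ (f '' {i : ℕ | i ≤ n}) ≤
      (Submodule.span ℂ (f '' {i : ℕ | i ≤ n + 1})).comap H := by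
    rw [Submodule.span_le]
    rintro _ ⟨i, hi, rfl⟩
    exact span_image_le_mono f (Nat.succ_le_succ hi) (hf i)
  exact hle hx

/-- The two cases of the Lanczos recursion in one form, with the coefficients forgotten. -/
theorem lanczosVec_succ_sub_mem {E : Type*} [NormedAddCommGroup E] [InnerProductSpace ℂ E]
    (H : E →ₗ[ℂ] E) (Φ : E) (n : ℕ) :
    lanczosVec H Φ (n + 1) - H (lanczosVec H Φ n) ∈
      Submodule.span ℂ (lanczosVec H Φ '' {i : ℕ | i ≤ n}) := by
  cases n with
  | zero =>
    have h := mem_span_image_le (lanczosVec H Φ) (le_refl 0)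
    rw [lanczosVec] at h
    rw [lanczosVec, lanczosVec, sub_sub_cancel_left]
    exact Submodule.neg_mem _ (Submodule.smul_mem _ _ h)
  | succ n =>
    rw [lanczosVec, sub_sub (H _), sub_sub_cancel_left]
    exact Submodule.neg_mem _ (Submodule.add_mem _
      (Submodule.smul_mem _ _ (mem_span_image_le _ le_rfl))
      (Submodule.smul_mem _ _ (mem_span_image_le _ n.le_succ)))

/-- The Lanczos vectors span the Krylov subspaces: for every `k ≤ N` the span of
`{v 0, …, v k}` equals the span of `{Φ, H Φ, …, H^k Φ}`. -/
theorem lanczosVec_span_krylov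
    {E : Type*} [NormedAddCommGroup E] [InnerProductSpace ℂ E] [FiniteDimensional ℂ E]
    (H : E →ₗ[ℂ] E) (hH : ∀ x y : E, ⟪H x, y⟫ = ⟪x, H y⟫)
    (Φ : E) (hΦ : Φ ≠ 0) (N : ℕ)
    (hnz : ∀ j ≤ N, lanczosVec H Φ j ≠ 0) :
    ∀ k ≤ N,
      Submodule.span ℂ (lanczosVec H Φ '' {i : ℕ | i ≤ k}) =
        Submodule.span ℂ ((fun j : ℕ => ((H : Module.End ℂ E) ^ j) Φ) '' {j : ℕ | j ≤ k}) := by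
  intro k _
  set v := lanczosVec H Φ with hv
  set u : ℕ → E := fun j => ((H : Module.End ℂ E) ^ j) Φ with hu
  have hu_succ : ∀ n, u (n + 1) = H (u n) := fun n => by
    simp only [hu, pow_succ', Module.End.mul_apply]
  have hv_zero : v 0 = u 0 := by simp [hv, hu, lanczosVec]
  have hHv : ∀ n, H (v n) ∈ Submodule.span ℂ (v '' {i : ℕ | i ≤ n + 1}) := fun n => by
    rw [← sub_sub_cancel (v (n + 1)) (H (v n))]
    exact Submodule.sub_mem _ (mem_span_image_le v le_rfl)
      (span_image_le_mono v n.le_succ (lanczosVec_succ_sub_mem H Φ n))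
  have hHu : ∀ n, H (u n) ∈ Submodule.span ℂ (u '' {i : ℕ | i ≤ n + 1}) := fun n =>
    hu_succ n ▸ mem_span_image_le u le_rfl
  have hu_mem : ∀ n, u n ∈ Submodule.span ℂ (v '' {i : ℕ | i ≤ n}) := fun n => by
    induction n with
    | zero => exact hv_zero ▸ mem_span_image_le v le_rfl
    | succ n ih => exact hu_succ n ▸ map_mem_span_image_succ H v hHv ih
  have hle : ∀ n, Submodule.span ℂ (v '' {i : ℕ | i ≤ n}) ≤
      Submodule.span ℂ (u '' {i : ℕ | i ≤ n}) := fun n => by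
    induction n with
    | zero =>
      rw [Submodule.span_le]
      rintro _ ⟨i, hi, rfl⟩
      obtain rfl : i = 0 := Nat.le_zero.mp hi
      exact hv_zero ▸ mem_span_image_le u le_rfl
    | succ n ih =>
      rw [Submodule.span_le]
      rintro _ ⟨i, hi, rfl⟩
      rcases Nat.le_succ_iff.mp hi with hi | rfl
      · exact span_image_le_mono u n.le_succ (ih (mem_span_image_le v hi))
      · rw [← sub_add_cancel (v n.succ) (H (v n))]
        exact Submodule.add_mem _
          (span_image_le_mono u n.le_succ (ih (lanczosVec_succ_sub_mem H Φ n)))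
          (map_mem_span_image_succ H u hHu (ih (mem_span_image_le v le_rfl)))
  refine le_antisymm (hle k) ?_
  rw [Submodule.span_le]
  rintro _ ⟨j, hj, rfl⟩
  exact span_image_le_mono v hj (hu_mem j)
end
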